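/- Let (S,d) be a complete separable metric space in which any two elements have distance at most one. Then the unbalanced Wasserstein distance W is a metric on M_{≤1}(S); moreover, restricted to Borel probability measures it coincides with the classical Wasserstein distance, i.e., for probability measures μ,ν on S, W(μ,ν) = inf_γ ∫_{S×S} d(x,y) dγ(x,y), where the infimum is over all couplings γ of μ and ν (probability measures on S×S with marginals μ and ν). -/

import Mathlib

open MeasureTheory Set

noncomputable section

def uwAux {X : Type _} [MeasurableSpace X] (d : X → X → ℝ) (μ ν : Measure X) : ℝ :=
  (μ Set.univ).toReal - (ν Set.univ).toReal +
    sInf {r : ℝ | ∃ γ : Measure (X × X), γ Set.univ ≤ 1 ∧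
      γ.map Prod.fst ≤ μ ∧ γ.map Prod.snd = ν ∧ r = ∫ p, d p.1 p.2 ∂γ}

open Classical in
/-- The unbalanced Wasserstein distance w.r.t. a distance function `d`:
`‖μ‖ - ‖ν‖` plus the optimal transport cost over sub-couplings, where w.l.o.g.
`‖μ‖ ≥ ‖ν‖`. -/
def uwDist {X : Type _} [MeasurableSpace X] (d : X → X → ℝ) (μ ν : Measure X) : ℝ :=
  if ν Set.univ ≤ μ Set.univ then uwAux d μ ν else uwAux d ν μ

/-- The classical Wasserstein distance (over couplings) w.r.t. a cost `d`. -/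
def wassersteinDist {X : Type _} [MeasurableSpace X] (d : X → X → ℝ)
    (μ ν : Measure X) : ℝ :=
  sInf {r : ℝ | ∃ γ : Measure (X × X),
    γ.map Prod.fst = μ ∧ γ.map Prod.snd = ν ∧ r = ∫ p, d p.1 p.2 ∂γ}

/-!
The distance has a symmetric description: `W(μ, ν)` is the infimum of
`∫ d dγ + (max ‖μ‖ ‖ν‖ - ‖γ‖)` over all *partial* couplings `γ`, those with marginals at most `μ`
and `ν`. Indeed, if `‖ν‖ ≤ ‖μ‖`, the masses that `γ` leaves out can be matched by a normalised
product measure, which costs at most its mass because `d ≤ 1`.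

For the triangle inequality, partial couplings `γ₁` of `(μ, ν)` and `γ₂` of `(ν, ξ)` are glued cell
by cell over a countable partition of the space into Borel sets `A i` of diameter at most `ε`, with
weight `ν (A i)⁻¹`. The glued measure `T` loses little mass, `‖γ₁‖ + ‖γ₂‖ ≤ ‖ν‖ + ‖T‖`, because
`a + b ≤ v + a b / v` whenever `a, b ≤ v`.

If `W(μ, ν) = 0`, Markov's inequality gives `μ B ≤ ν (Metric.thickening δ B)` for all small `δ`,
whence `μ B ≤ ν B` for closed `B`.
-/

open Function Metric
open scoped ENNReal

lemma measureReal_sub_le_of_le {X : Type*} [MeasurableSpace X] {ρ μ : Measure X}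
    [IsFiniteMeasure μ] (h : ρ ≤ μ) {B : Set X} (hB : MeasurableSet B) :
    μ.real B - ρ.real B ≤ μ.real univ - ρ.real univ := by
  have : IsFiniteMeasure ρ := isFiniteMeasure_of_le μ h
  have compl_le : ρ.real Bᶜ ≤ μ.real Bᶜ := ENNReal.toReal_mono (measure_ne_top _ _) (h _)
  rw [measureReal_compl hB, measureReal_compl hB] at compl_le
  linarith

lemma eq_of_forall_isClosed_measure_eq {S : Type*} [TopologicalSpace S] [MeasurableSpace S]
    [BorelSpace S] {μ ν : Measure S} [IsFiniteMeasure μ] (h : ∀ B, IsClosed B → μ B = ν B) :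
    μ = ν :=
  ext_of_generate_finite _ (BorelSpace.measurable_eq.trans borel_eq_generateFrom_isClosed)
    isPiSystem_isClosed h (h univ isClosed_univ)

section Gluing

variable {E F Y ι : Type*} [MeasurableSpace E] [MeasurableSpace F] [MeasurableSpace Y]

/-- The gluing of `α` and `β` along maps `f`, `g` to `Y`, relative to cells `A i` of `Y`: over each
cell, the product of the parts of `α` and `β` that lie above it, with weight `ν (A i)⁻¹`. A cell
with `ν (A i) = 0` contributes nothing as soon as `α.map f ≤ ν`. -/
def cellGluing (α : Measure E) (β : Measure F) (f : E → Y) (g : F → Y) (ν : Measure Y)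
    (A : ι → Set Y) : Measure (E × F) :=
  Measure.sum fun i => (ν (A i))⁻¹ • (α.restrict (f ⁻¹' A i)).prod (β.restrict (g ⁻¹' A i))

variable {α : Measure E} {β : Measure F} {f : E → Y} {g : F → Y} {ν : Measure Y} {A : ι → Set Y}

lemma measure_preimage_le_of_map_le (hf : Measurable f) (hα : α.map f ≤ ν) {s : Set Y}
    (hs : MeasurableSet s) : α (f ⁻¹' s) ≤ ν s :=
  (Measure.map_apply hf hs).symm.trans_le (hα s)

lemma sum_restrict_preimage [Countable ι] (hf : Measurable f) (hA : ∀ i, MeasurableSet (A i))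
    (hdisj : Pairwise (Disjoint on A)) (hcover : ⋃ i, A i = univ) :
    Measure.sum (fun i => α.restrict (f ⁻¹' A i)) = α := by
  rw [← Measure.restrict_iUnion (fun i j hij => (hdisj hij).preimage f) (fun i => hf (hA i)),
    ← preimage_iUnion, hcover, preimage_univ, Measure.restrict_univ]

lemma measure_univ_eq_tsum_preimage [Countable ι] (hf : Measurable f)
    (hA : ∀ i, MeasurableSet (A i)) (hdisj : Pairwise (Disjoint on A))
    (hcover : ⋃ i, A i = univ) : α univ = ∑' i, α (f ⁻¹' A i) := by
  conv_lhs => rw [← sum_restrict_preimage (α := α) hf hA hdisj hcover]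
  simp only [Measure.sum_apply _ MeasurableSet.univ, Measure.restrict_apply_univ]

lemma fst_cellGluing_le [Countable ι] [SFinite β] (hf : Measurable f) (hg : Measurable g)
    (hβ : β.map g ≤ ν) (hA : ∀ i, MeasurableSet (A i)) (hdisj : Pairwise (Disjoint on A))
    (hcover : ⋃ i, A i = univ) : (cellGluing α β f g ν A).fst ≤ α := by
  have weight_le_one (i : ι) : (ν (A i))⁻¹ * β (g ⁻¹' A i) ≤ 1 :=
    (mul_le_mul_right (measure_preimage_le_of_map_le hg hβ (hA i)) _).trans
      (ENNReal.inv_mul_le_one _)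
  calc (cellGluing α β f g ν A).fst
      = Measure.sum fun i => ((ν (A i))⁻¹ * β (g ⁻¹' A i)) • α.restrict (f ⁻¹' A i) := by
        rw [cellGluing, Measure.fst_sum]
        simp only [Measure.fst, Measure.map_smul, Measure.map_fst_prod,
          Measure.restrict_apply_univ, smul_smul]
    _ ≤ Measure.sum fun i => α.restrict (f ⁻¹' A i) := by
        refine Measure.le_iff.2 fun s hs => ?_
        simp only [Measure.sum_apply _ hs, Measure.smul_apply, smul_eq_mul]
        exact ENNReal.tsum_le_tsum fun i => mul_le_of_le_one_left' (weight_le_one i)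
    _ = α := sum_restrict_preimage hf hA hdisj hcover

lemma map_swap_cellGluing [SFinite α] [SFinite β] :
    (cellGluing α β f g ν A).map Prod.swap = cellGluing β α g f ν A := by
  simp only [cellGluing, Measure.map_sum measurable_swap.aemeasurable, Measure.map_smul,
    Measure.prod_swap]

lemma snd_cellGluing_le [Countable ι] [SFinite α] [SFinite β] (hf : Measurable f)
    (hg : Measurable g) (hα : α.map f ≤ ν) (hA : ∀ i, MeasurableSet (A i))
    (hdisj : Pairwise (Disjoint on A)) (hcover : ⋃ i, A i = univ) :
    (cellGluing α β f g ν A).snd ≤ β := by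
  rw [← Measure.fst_map_swap, map_swap_cellGluing]
  exact fst_cellGluing_le hg hf hα hA hdisj hcover

lemma ae_cellGluing [Countable ι] [SFinite α] [SFinite β] (hf : Measurable f) (hg : Measurable g)
    (hA : ∀ i, MeasurableSet (A i)) :
    ∀ᵐ p ∂cellGluing α β f g ν A, ∃ i, f p.1 ∈ A i ∧ g p.2 ∈ A i := by
  refine Measure.ae_sum_iff.2 fun i => Measure.ae_smul_measure ?_ _
  rw [Measure.prod_restrict]
  filter_upwards [ae_restrict_mem ((hf (hA i)).prod (hg (hA i)))] with p hp using ⟨i, hp⟩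

lemma add_le_add_inv_mul_mul {a b v : ℝ≥0∞} (ha : a ≤ v) (hb : b ≤ v) (hv : v ≠ ∞) :
    a + b ≤ v + v⁻¹ * (a * b) := by
  rcases eq_or_ne v 0 with rfl | hv0
  · simp_all
  lift v to NNReal using hv
  lift a to NNReal using ne_top_of_le_ne_top ENNReal.coe_ne_top ha
  lift b to NNReal using ne_top_of_le_ne_top ENNReal.coe_ne_top hb
  norm_cast at ha hb hv0
  have hv_pos : (0 : ℝ) < v := by exact_mod_cast pos_of_ne_zero hv0
  rw [← ENNReal.coe_inv hv0]
  norm_cast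
  rw [← NNReal.coe_le_coe] at ha hb ⊢
  push_cast
  have key : 0 ≤ (v - a : ℝ) * (v - b) / v := by
    have := sub_nonneg.2 ha
    have := sub_nonneg.2 hb
    positivity
  have expand : (v - a : ℝ) * (v - b) / v = v + (v : ℝ)⁻¹ * (a * b) - (a + b) := by
    field_simp
    ring
  linarith

lemma add_measure_univ_le_cellGluing [Countable ι] [SFinite β] [IsFiniteMeasure ν]
    (hf : Measurable f) (hg : Measurable g) (hα : α.map f ≤ ν) (hβ : β.map g ≤ ν)
    (hA : ∀ i, MeasurableSet (A i)) (hdisj : Pairwise (Disjoint on A))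
    (hcover : ⋃ i, A i = univ) :
    α univ + β univ ≤ ν univ + cellGluing α β f g ν A univ := by
  have gluing_univ : cellGluing α β f g ν A univ =
      ∑' i, (ν (A i))⁻¹ * (α (f ⁻¹' A i) * β (g ⁻¹' A i)) := by
    rw [cellGluing, Measure.sum_apply _ MeasurableSet.univ]
    simp only [Measure.smul_apply, ← univ_prod_univ, Measure.prod_prod,
      Measure.restrict_apply_univ, smul_eq_mul]
  rw [measure_univ_eq_tsum_preimage hf hA hdisj hcover,
    measure_univ_eq_tsum_preimage hg hA hdisj hcover,
    measure_univ_eq_tsum_preimage (α := ν) measurable_id hA hdisj hcover, gluing_univ,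
    ← ENNReal.tsum_add, ← ENNReal.tsum_add]
  exact ENNReal.tsum_le_tsum fun i => add_le_add_inv_mul_mul
    (measure_preimage_le_of_map_le hf hα (hA i)) (measure_preimage_le_of_map_le hg hβ (hA i))
    (measure_ne_top ν _)

end Gluing

section PartialCoupling

variable {X Y : Type*} [MeasurableSpace X] [MeasurableSpace Y]

lemma exists_fst_le_snd_eq (μ : Measure X) (ν : Measure Y) [IsFiniteMeasure μ] [SFinite ν]
    (h : ν univ ≤ μ univ) : ∃ γ : Measure (X × Y), γ.fst ≤ μ ∧ γ.snd = ν := by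
  refine ⟨(μ univ)⁻¹ • μ.prod ν, ?_, ?_⟩
  · rw [Measure.fst, Measure.map_smul, Measure.map_fst_prod, smul_smul]
    have weight_le_one : (μ univ)⁻¹ * ν univ ≤ 1 :=
      (mul_le_mul_right h _).trans (ENNReal.inv_mul_le_one _)
    exact Measure.le_iff'.2 fun s => mul_le_of_le_one_left' weight_le_one
  · rw [Measure.snd, Measure.map_smul, Measure.map_snd_prod, smul_smul]
    rcases eq_or_ne (μ univ) 0 with hμ | hμ
    · rw [Measure.measure_univ_eq_zero.1 (le_zero_iff.1 (h.trans_eq hμ)), smul_zero]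
    · rw [ENNReal.inv_mul_cancel hμ (measure_ne_top _ _), one_smul]

/-- A partial coupling of `μ` and `ν`: a transport plan that moves part of the mass of `μ` onto part
of the mass of `ν`. -/
structure IsPartialCoupling (γ : Measure (X × Y)) (μ : Measure X) (ν : Measure Y) : Prop where
  fst_le : γ.fst ≤ μ
  snd_le : γ.snd ≤ ν

namespace IsPartialCoupling

variable {γ : Measure (X × Y)} {μ : Measure X} {ν : Measure Y}

lemma swap (hγ : IsPartialCoupling γ μ ν) : IsPartialCoupling (γ.map Prod.swap) ν μ :=
  ⟨Measure.fst_map_swap.trans_le hγ.snd_le, Measure.snd_map_swap.trans_le hγ.fst_le⟩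

lemma measure_univ_le_left (hγ : IsPartialCoupling γ μ ν) : γ univ ≤ μ univ :=
  Measure.fst_univ.symm.trans_le (hγ.fst_le univ)

lemma isFiniteMeasure [IsFiniteMeasure μ] (hγ : IsPartialCoupling γ μ ν) : IsFiniteMeasure γ :=
  ⟨hγ.measure_univ_le_left.trans_lt (measure_lt_top μ univ)⟩

lemma map_outer {Y' Z : Type*} [MeasurableSpace Y'] [MeasurableSpace Z] {ξ : Measure Z}
    {T : Measure ((X × Y) × Y' × Z)} (hfst : T.fst.fst ≤ μ) (hsnd : T.snd.snd ≤ ξ) :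
    IsPartialCoupling (T.map fun p => (p.1.1, p.2.2)) μ ξ := by
  rw [Measure.fst, Measure.fst, Measure.map_map measurable_fst measurable_fst] at hfst
  rw [Measure.snd, Measure.snd, Measure.map_map measurable_snd measurable_snd] at hsnd
  constructor
  · rwa [Measure.fst, Measure.map_map measurable_fst (by fun_prop)]
  · rwa [Measure.snd, Measure.map_map measurable_snd (by fun_prop)]

lemma exists_add_snd_eq [IsFiniteMeasure μ] [IsFiniteMeasure ν] (hγ : IsPartialCoupling γ μ ν)
    (h : ν univ ≤ μ univ) :
    ∃ π : Measure (X × Y), (γ + π).fst ≤ μ ∧ (γ + π).snd = ν := by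
  have := hγ.isFiniteMeasure
  have left_residual : γ.fst + (μ - γ.fst) = μ := by
    rw [add_comm, Measure.sub_add_cancel_of_le hγ.fst_le]
  have right_residual : γ.snd + (ν - γ.snd) = ν := by
    rw [add_comm, Measure.sub_add_cancel_of_le hγ.snd_le]
  have residual_le : (ν - γ.snd) univ ≤ (μ - γ.fst) univ := by
    rw [← left_residual, ← right_residual, Measure.add_apply, Measure.add_apply,
      Measure.fst_univ, Measure.snd_univ] at h
    exact (ENNReal.add_le_add_iff_left (measure_ne_top γ univ)).1 h
  obtain ⟨π, hπ_fst, hπ_snd⟩ := exists_fst_le_snd_eq (μ - γ.fst) (ν - γ.snd) residual_le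
  refine ⟨π, ?_, ?_⟩
  · rw [Measure.fst_add]
    exact (add_le_add_right hπ_fst _).trans_eq left_residual
  · rw [Measure.snd_add, hπ_snd, right_residual]

end IsPartialCoupling

end PartialCoupling

section PartialCost

variable {X : Type*} [MeasurableSpace X] {d : X → X → ℝ} {μ ν : Measure X}
  {γ π : Measure (X × X)}

/-- The cost of a partial coupling `γ` of `μ` and `ν`: its transport cost, plus one unit for each
unit of the larger of the two masses that `γ` does not transport. -/
def partialCost (d : X → X → ℝ) (μ ν : Measure X) (γ : Measure (X × X)) : ℝ :=
  ∫ p, d p.1 p.2 ∂γ + (max (μ.real univ) (ν.real univ) - γ.real univ)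

/-- The set of costs of partial couplings of `μ` and `ν`, whose infimum is the unbalanced
Wasserstein distance. -/
def partialCosts (d : X → X → ℝ) (μ ν : Measure X) : Set ℝ :=
  partialCost d μ ν '' {γ | IsPartialCoupling γ μ ν}

lemma partialCost_map_swap (hsymm : ∀ x y, d x y = d y x) :
    partialCost d ν μ (γ.map Prod.swap) = partialCost d μ ν γ := by
  have cost_swap : ∫ p, d p.1 p.2 ∂γ.map Prod.swap = ∫ p, d p.1 p.2 ∂γ :=
    (integral_map_equiv MeasurableEquiv.prodComm _).trans
      (integral_congr_ae (.of_forall fun p => hsymm p.2 p.1))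
  rw [partialCost, partialCost, cost_swap, max_comm,
    map_measureReal_apply measurable_swap MeasurableSet.univ, preimage_univ]

lemma partialCosts_comm (hsymm : ∀ x y, d x y = d y x) :
    partialCosts d μ ν = partialCosts d ν μ := by
  have subset_swap (μ ν : Measure X) : partialCosts d μ ν ⊆ partialCosts d ν μ := by
    rintro _ ⟨γ, hγ, rfl⟩
    exact ⟨γ.map Prod.swap, hγ.swap, partialCost_map_swap hsymm⟩
  exact (subset_swap μ ν).antisymm (subset_swap ν μ)

lemma integrable_of_mem_Icc (hmeas : Measurable fun p : X × X => d p.1 p.2)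
    (hd : ∀ x y, d x y ∈ Icc 0 1) {Ω : Type*} [MeasurableSpace Ω] (ρ : Measure Ω)
    [IsFiniteMeasure ρ] {f g : Ω → X} (hf : Measurable f) (hg : Measurable g) :
    Integrable (fun ω => d (f ω) (g ω)) ρ :=
  Integrable.of_mem_Icc 0 1 (hmeas.comp (hf.prodMk hg)).aemeasurable (.of_forall fun _ => hd _ _)

lemma partialCost_add_le (hmeas : Measurable fun p : X × X => d p.1 p.2)
    (hd : ∀ x y, d x y ∈ Icc 0 1) [IsFiniteMeasure γ] [IsFiniteMeasure π] :
    partialCost d μ ν (γ + π) ≤ partialCost d μ ν γ := by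
  have integrable (ρ : Measure (X × X)) [IsFiniteMeasure ρ] :
      Integrable (fun p => d p.1 p.2) ρ :=
    integrable_of_mem_Icc hmeas hd ρ measurable_fst measurable_snd
  have cost_le_mass : ∫ p, d p.1 p.2 ∂π ≤ π.real univ := by
    simpa using integral_mono (integrable π) (integrable_const 1) fun p => (hd p.1 p.2).2
  rw [partialCost, partialCost, integral_add_measure (integrable γ) (integrable π),
    measureReal_add_apply]
  linarith

lemma partialCost_of_snd_eq [IsFiniteMeasure μ] (h : ν univ ≤ μ univ) (hγ : γ.snd = ν) :
    partialCost d μ ν γ = μ.real univ - ν.real univ + ∫ p, d p.1 p.2 ∂γ := by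
  have mass : γ.real univ = ν.real univ := by
    rw [measureReal_def, measureReal_def, ← hγ, Measure.snd_univ]
  have hmax : max (μ.real univ) (ν.real univ) = μ.real univ :=
    max_eq_left (ENNReal.toReal_mono (measure_ne_top μ univ) h)
  rw [partialCost, mass, hmax, add_comm]

lemma uwAux_le (hd : ∀ x y, 0 ≤ d x y) (hν : ν univ ≤ 1) (hfst : γ.fst ≤ μ) (hsnd : γ.snd = ν) :
    uwAux d μ ν ≤ μ.real univ - ν.real univ + ∫ p, d p.1 p.2 ∂γ := by
  have mass_le_one : γ univ ≤ 1 := by rwa [← Measure.snd_univ, hsnd]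
  refine add_le_add le_rfl (csInf_le ⟨0, ?_⟩ ⟨γ, mass_le_one, hfst, hsnd, rfl⟩)
  rintro _ ⟨ρ, -, -, -, rfl⟩
  exact integral_nonneg fun p => hd p.1 p.2

lemma isGLB_uwAux (hmeas : Measurable fun p : X × X => d p.1 p.2) (hd : ∀ x y, d x y ∈ Icc 0 1)
    [IsFiniteMeasure μ] (hν : ν univ ≤ 1) (h : ν univ ≤ μ univ) :
    IsGLB (partialCosts d μ ν) (uwAux d μ ν) := by
  have : IsFiniteMeasure ν := ⟨hν.trans_lt ENNReal.one_lt_top⟩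
  constructor
  · rintro _ ⟨γ, hγ, rfl⟩
    obtain ⟨π, hfst, hsnd⟩ := hγ.exists_add_snd_eq h
    have := hγ.isFiniteMeasure
    have : IsFiniteMeasure (γ + π) := (IsPartialCoupling.mk hfst hsnd.le).isFiniteMeasure
    have : IsFiniteMeasure π := isFiniteMeasure_of_le _ (Measure.le_add_left le_rfl : π ≤ γ + π)
    calc uwAux d μ ν ≤ μ.real univ - ν.real univ + ∫ p, d p.1 p.2 ∂(γ + π) :=
          uwAux_le (fun x y => (hd x y).1) hν hfst hsnd
      _ = partialCost d μ ν (γ + π) := (partialCost_of_snd_eq h hsnd).symm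
      _ ≤ partialCost d μ ν γ := partialCost_add_le hmeas hd
  · intro b hb
    obtain ⟨γ₀, hfst₀, hsnd₀⟩ := exists_fst_le_snd_eq μ ν h
    have mass_le_one : γ₀ univ ≤ 1 := by rwa [← Measure.snd_univ, hsnd₀]
    refine sub_le_iff_le_add'.1 (le_csInf ⟨_, γ₀, mass_le_one, hfst₀, hsnd₀, rfl⟩ ?_)
    rintro _ ⟨γ, -, hfst, hsnd, rfl⟩
    rw [sub_le_iff_le_add']
    exact (hb ⟨γ, ⟨hfst, hsnd.le⟩, rfl⟩).trans_eq (partialCost_of_snd_eq h hsnd)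

end PartialCost

section UnbalancedWasserstein

variable {X : Type*} [MeasurableSpace X] {d : X → X → ℝ} {μ ν : Measure X}

lemma isGLB_uwDist (hmeas : Measurable fun p : X × X => d p.1 p.2) (hd : ∀ x y, d x y ∈ Icc 0 1)
    (hsymm : ∀ x y, d x y = d y x) (hμ : μ univ ≤ 1) (hν : ν univ ≤ 1) :
    IsGLB (partialCosts d μ ν) (uwDist d μ ν) := by
  have : IsFiniteMeasure μ := ⟨hμ.trans_lt ENNReal.one_lt_top⟩
  have : IsFiniteMeasure ν := ⟨hν.trans_lt ENNReal.one_lt_top⟩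
  unfold uwDist
  split_ifs with h
  · exact isGLB_uwAux hmeas hd hν h
  · rw [partialCosts_comm hsymm]
    exact isGLB_uwAux hmeas hd hμ (not_le.1 h).le

lemma uwDist_comm (hmeas : Measurable fun p : X × X => d p.1 p.2) (hd : ∀ x y, d x y ∈ Icc 0 1)
    (hsymm : ∀ x y, d x y = d y x) (hμ : μ univ ≤ 1) (hν : ν univ ≤ 1) :
    uwDist d μ ν = uwDist d ν μ :=
  (isGLB_uwDist hmeas hd hsymm hμ hν).unique <| by
    rw [partialCosts_comm hsymm]
    exact isGLB_uwDist hmeas hd hsymm hν hμ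

lemma uwAux_nonneg (hd : ∀ x y, 0 ≤ d x y) [IsFiniteMeasure μ] (h : ν univ ≤ μ univ) :
    0 ≤ uwAux d μ ν := by
  refine add_nonneg (sub_nonneg.2 (ENNReal.toReal_mono (measure_ne_top μ univ) h))
    (Real.sInf_nonneg ?_)
  rintro _ ⟨γ, -, -, -, rfl⟩
  exact integral_nonneg fun p => hd p.1 p.2

lemma uwDist_nonneg (hd : ∀ x y, 0 ≤ d x y) [IsFiniteMeasure μ] [IsFiniteMeasure ν] :
    0 ≤ uwDist d μ ν := by
  unfold uwDist
  split_ifs with h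
  · exact uwAux_nonneg hd h
  · exact uwAux_nonneg hd (not_le.1 h).le

lemma uwDist_self (hmeas : Measurable fun p : X × X => d p.1 p.2) (hd : ∀ x y, 0 ≤ d x y)
    (hdiag : ∀ x, d x x = 0) (hμ : μ univ ≤ 1) : uwDist d μ μ = 0 := by
  have : IsFiniteMeasure μ := ⟨hμ.trans_lt ENNReal.one_lt_top⟩
  have hdiag_meas : Measurable fun x : X => (x, x) := by fun_prop
  have hfst : (μ.map fun x => (x, x)).fst = μ :=
    (Measure.map_map measurable_fst hdiag_meas).trans Measure.map_id
  have hsnd : (μ.map fun x => (x, x)).snd = μ :=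
    (Measure.map_map measurable_snd hdiag_meas).trans Measure.map_id
  have cost_eq_zero : ∫ p, d p.1 p.2 ∂μ.map (fun x => (x, x)) = 0 := by
    rw [integral_map hdiag_meas.aemeasurable hmeas.aestronglyMeasurable]
    simp only [hdiag, integral_zero]
  refine le_antisymm ?_ (uwDist_nonneg hd)
  rw [uwDist, if_pos le_rfl]
  exact (uwAux_le hd hμ hfst.le hsnd).trans_eq (by rw [cost_eq_zero, sub_self, add_zero])

lemma uwDist_eq_wassersteinDist [IsProbabilityMeasure μ] [IsProbabilityMeasure ν] :
    uwDist d μ ν = wassersteinDist d μ ν := by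
  rw [uwDist, if_pos (by simp only [measure_univ, le_rfl]), uwAux, wassersteinDist]
  simp only [measure_univ, sub_self, zero_add]
  congr 1 with r
  constructor
  · rintro ⟨γ, -, hfst, hsnd, rfl⟩
    have hγ : γ univ = 1 := by rw [← Measure.snd_univ, Measure.snd, hsnd, measure_univ]
    have : IsFiniteMeasure γ := ⟨hγ.trans_lt ENNReal.one_lt_top⟩
    have fst_univ_eq : γ.fst univ = μ univ := by rw [Measure.fst_univ, hγ, measure_univ]
    exact ⟨γ, Measure.eq_of_le_of_measure_univ_eq hfst fst_univ_eq, hsnd, rfl⟩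
  · rintro ⟨γ, hfst, hsnd, rfl⟩
    have hγ : γ univ = 1 := by rw [← Measure.snd_univ, Measure.snd, hsnd, measure_univ]
    exact ⟨γ, hγ.le, hfst.le, hsnd, rfl⟩

end UnbalancedWasserstein

section Metric

variable {S : Type*} [PseudoMetricSpace S]

lemma dist_mem_Icc_zero_one (hd : ∀ x y : S, dist x y ≤ 1) (x y : S) : dist x y ∈ Icc 0 1 :=
  ⟨dist_nonneg, hd x y⟩

variable [SecondCountableTopology S] [MeasurableSpace S] [OpensMeasurableSpace S]
  {μ ν ξ : Measure S}

lemma isGLB_uwDist_dist (hd : ∀ x y : S, dist x y ≤ 1) (hμ : μ univ ≤ 1) (hν : ν univ ≤ 1) :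
    IsGLB (partialCosts dist μ ν) (uwDist dist μ ν) :=
  isGLB_uwDist measurable_dist (dist_mem_Icc_zero_one hd) dist_comm hμ hν

lemma integrable_dist (hd : ∀ x y : S, dist x y ≤ 1) {Ω : Type*} [MeasurableSpace Ω]
    (ρ : Measure Ω) [IsFiniteMeasure ρ] {f g : Ω → S} (hf : Measurable f) (hg : Measurable g) :
    Integrable (fun ω => dist (f ω) (g ω)) ρ :=
  integrable_of_mem_Icc measurable_dist (dist_mem_Icc_zero_one hd) ρ hf hg

lemma integral_dist_le_of_map_le (hd : ∀ x y : S, dist x y ≤ 1) {Ω : Type*} [MeasurableSpace Ω]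
    {T : Measure Ω} {γ : Measure (S × S)} [IsFiniteMeasure γ] {q : Ω → S × S} (hq : Measurable q)
    (hle : T.map q ≤ γ) : ∫ ω, dist (q ω).1 (q ω).2 ∂T ≤ ∫ p, dist p.1 p.2 ∂γ := by
  rw [← integral_map hq.aemeasurable
    (measurable_dist : Measurable fun p : S × S => dist p.1 p.2).aestronglyMeasurable]
  exact integral_mono_measure hle (.of_forall fun _ => dist_nonneg)
    (integrable_dist hd γ measurable_fst measurable_snd)

lemma integral_dist_outer_le (hd : ∀ x y : S, dist x y ≤ 1) {T : Measure ((S × S) × S × S)}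
    {γ₁ γ₂ : Measure (S × S)} [IsFiniteMeasure γ₁] [IsFiniteMeasure γ₂] (hfst : T.fst ≤ γ₁)
    (hsnd : T.snd ≤ γ₂) {ε : ℝ} (hε : ∀ᵐ p ∂T, dist p.1.2 p.2.1 ≤ ε) :
    ∫ p, dist p.1.1 p.2.2 ∂T ≤
      ∫ p, dist p.1 p.2 ∂γ₁ + ε * T.real univ + ∫ p, dist p.1 p.2 ∂γ₂ := by
  have : IsFiniteMeasure T :=
    ⟨(Measure.fst_univ.symm.trans_le (hfst univ)).trans_lt (measure_lt_top γ₁ univ)⟩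
  have int_left : Integrable (fun p => dist p.1.1 p.1.2) T :=
    integrable_dist hd T (by fun_prop) (by fun_prop)
  have int_right : Integrable (fun p => dist p.2.1 p.2.2) T :=
    integrable_dist hd T (by fun_prop) (by fun_prop)
  have int_left_mid : Integrable (fun p => dist p.1.1 p.1.2 + ε) T :=
    int_left.add (integrable_const ε)
  calc ∫ p, dist p.1.1 p.2.2 ∂T
      ≤ ∫ p, dist p.1.1 p.1.2 + ε + dist p.2.1 p.2.2 ∂T := by
        refine integral_mono_ae (integrable_dist hd T (by fun_prop) (by fun_prop))
          (int_left_mid.add int_right) ?_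
        filter_upwards [hε] with p hp
        exact (dist_triangle4 p.1.1 p.1.2 p.2.1 p.2.2).trans (by gcongr)
    _ = ∫ p, dist p.1.1 p.1.2 ∂T + ε * T.real univ + ∫ p, dist p.2.1 p.2.2 ∂T := by
        rw [integral_add int_left_mid int_right, integral_add int_left (integrable_const ε),
          integral_const, smul_eq_mul, mul_comm]
    _ ≤ _ := by
        gcongr
        · exact integral_dist_le_of_map_le hd measurable_fst hfst
        · exact integral_dist_le_of_map_le hd measurable_snd hsnd

lemma partialCost_map_outer_le [IsFiniteMeasure ν] (hd : ∀ x y : S, dist x y ≤ 1)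
    {T : Measure ((S × S) × S × S)} {γ₁ γ₂ : Measure (S × S)} [IsFiniteMeasure γ₁]
    [IsFiniteMeasure γ₂] (hfst : T.fst ≤ γ₁) (hsnd : T.snd ≤ γ₂)
    (hmass : γ₁ univ + γ₂ univ ≤ ν univ + T univ) {ε : ℝ}
    (hε : ∀ᵐ p ∂T, dist p.1.2 p.2.1 ≤ ε) :
    partialCost dist μ ξ (T.map fun p => (p.1.1, p.2.2)) ≤
      partialCost dist μ ν γ₁ + partialCost dist ν ξ γ₂ + ε * T.real univ := by
  have : IsFiniteMeasure T :=
    ⟨(Measure.fst_univ.symm.trans_le (hfst univ)).trans_lt (measure_lt_top γ₁ univ)⟩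
  have outer_meas : Measurable fun p : (S × S) × S × S => (p.1.1, p.2.2) := by fun_prop
  have outer_cost : ∫ p, dist p.1 p.2 ∂T.map (fun p => (p.1.1, p.2.2)) =
      ∫ p, dist p.1.1 p.2.2 ∂T :=
    integral_map outer_meas.aemeasurable measurable_dist.aestronglyMeasurable
  have outer_cost_le := integral_dist_outer_le hd hfst hsnd hε
  have mass_le : γ₁.real univ + γ₂.real univ ≤ ν.real univ + T.real univ := by
    simp only [measureReal_def]
    rw [← ENNReal.toReal_add (by finiteness) (by finiteness),
      ← ENNReal.toReal_add (by finiteness) (by finiteness)]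
    exact ENNReal.toReal_mono (by finiteness) hmass
  have max_add_le : max (μ.real univ) (ξ.real univ) + ν.real univ ≤
      max (μ.real univ) (ν.real univ) + max (ν.real univ) (ξ.real univ) := by
    grind
  rw [partialCost, partialCost, partialCost, outer_cost,
    map_measureReal_apply outer_meas MeasurableSet.univ, preimage_univ]
  linarith

lemma IsPartialCoupling.exists_glued_partialCost_le [IsFiniteMeasure ν]
    (hd : ∀ x y : S, dist x y ≤ 1) {γ₁ γ₂ : Measure (S × S)} (h₁ : IsPartialCoupling γ₁ μ ν)
    (h₂ : IsPartialCoupling γ₂ ν ξ) {ε : ℝ} (hε : 0 < ε) :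
    ∃ γ, IsPartialCoupling γ μ ξ ∧ partialCost dist μ ξ γ ≤
      partialCost dist μ ν γ₁ + partialCost dist ν ξ γ₂ + ε * ν.real univ := by
  obtain ⟨A, hA, hbdd, hdiam, hcover, hdisj⟩ :=
    SeparableSpace.exists_measurable_partition_diam_le S hε
  have := h₂.isFiniteMeasure
  have : IsFiniteMeasure γ₁ := ⟨(Measure.snd_univ.symm.trans_le (h₁.snd_le univ)).trans_lt
    (measure_lt_top ν univ)⟩
  set T := cellGluing γ₁ γ₂ Prod.snd Prod.fst ν A
  have hfst : T.fst ≤ γ₁ :=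
    fst_cellGluing_le measurable_snd measurable_fst h₂.fst_le hA hdisj hcover
  have hsnd : T.snd ≤ γ₂ :=
    snd_cellGluing_le measurable_snd measurable_fst h₁.snd_le hA hdisj hcover
  have hmass : γ₁ univ + γ₂ univ ≤ ν univ + T univ := add_measure_univ_le_cellGluing
    measurable_snd measurable_fst h₁.snd_le h₂.fst_le hA hdisj hcover
  have middle_close : ∀ᵐ p ∂T, dist p.1.2 p.2.1 ≤ ε := by
    filter_upwards [ae_cellGluing measurable_snd measurable_fst hA] with p ⟨i, hi₁, hi₂⟩
    exact (dist_le_diam_of_mem (hbdd i) hi₁ hi₂).trans (hdiam i)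
  have T_le_ν : T.real univ ≤ ν.real univ := ENNReal.toReal_mono (measure_ne_top ν univ) <|
    (Measure.snd_univ.symm.trans_le (hsnd univ)).trans h₂.measure_univ_le_left
  exact ⟨T.map fun p => (p.1.1, p.2.2), .map_outer
    ((Measure.fst_mono hfst).trans h₁.fst_le) ((Measure.snd_mono hsnd).trans h₂.snd_le),
    (partialCost_map_outer_le hd hfst hsnd hmass middle_close).trans (by gcongr)⟩

lemma uwDist_triangle (hd : ∀ x y : S, dist x y ≤ 1) (hμ : μ univ ≤ 1) (hν : ν univ ≤ 1)
    (hξ : ξ univ ≤ 1) :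
    uwDist dist μ ξ ≤ uwDist dist μ ν + uwDist dist ν ξ := by
  have : IsFiniteMeasure ν := ⟨hν.trans_lt ENNReal.one_lt_top⟩
  refine le_of_forall_pos_le_add fun ε hε => ?_
  have hε₃ : 0 < ε / 3 := by positivity
  obtain ⟨_, ⟨γ₁, h₁, rfl⟩, -, cost₁⟩ := (isGLB_uwDist_dist hd hμ hν).exists_between_self_add hε₃
  obtain ⟨_, ⟨γ₂, h₂, rfl⟩, -, cost₂⟩ := (isGLB_uwDist_dist hd hν hξ).exists_between_self_add hε₃
  obtain ⟨γ, hγ, cost⟩ := h₁.exists_glued_partialCost_le hd h₂ hε₃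
  have error_le : ε / 3 * ν.real univ ≤ ε / 3 :=
    mul_le_of_le_one_right hε₃.le (ENNReal.toReal_le_of_le_ofReal zero_le_one (by simpa using hν))
  have le_cost : uwDist dist μ ξ ≤ partialCost dist μ ξ γ :=
    (isGLB_uwDist_dist hd hμ hξ).1 ⟨γ, hγ, rfl⟩
  linarith

lemma mul_measureReal_fst_le (hd : ∀ x y : S, dist x y ≤ 1) (γ : Measure (S × S))
    [IsFiniteMeasure γ] {δ : ℝ} (hδ : 0 ≤ δ) {B : Set S} (hB : MeasurableSet B) :
    δ * γ.fst.real B ≤ δ * γ.snd.real (thickening δ B) + ∫ p, dist p.1 p.2 ∂γ := by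
  have far_or_near : Prod.fst ⁻¹' B ⊆
      Prod.snd ⁻¹' thickening δ B ∪ {p : S × S | δ ≤ dist p.1 p.2} := fun p hp => by
    refine (lt_or_ge (dist p.1 p.2) δ).imp (fun hlt => ?_) id
    exact mem_thickening_iff.2 ⟨p.1, hp, by rwa [dist_comm]⟩
  have markov := mul_meas_ge_le_integral_of_nonneg (.of_forall fun _ => dist_nonneg)
    (integrable_dist hd γ measurable_fst measurable_snd) δ
  calc δ * γ.fst.real B
      ≤ δ * (γ.snd.real (thickening δ B) + γ.real {p | δ ≤ dist p.1 p.2}) := by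
        rw [Measure.fst, Measure.snd, map_measureReal_apply measurable_fst hB,
          map_measureReal_apply measurable_snd isOpen_thickening.measurableSet]
        gcongr
        exact (measureReal_mono far_or_near).trans (measureReal_union_le _ _)
    _ ≤ _ := by
        rw [mul_add]
        gcongr

lemma IsPartialCoupling.mul_measureReal_le [IsFiniteMeasure μ] [IsFiniteMeasure ν]
    (hd : ∀ x y : S, dist x y ≤ 1) {γ : Measure (S × S)} (hγ : IsPartialCoupling γ μ ν) {δ : ℝ}
    (hδ : 0 ≤ δ) (hδ₁ : δ ≤ 1) {B : Set S} (hB : MeasurableSet B) :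
    δ * μ.real B ≤ δ * ν.real (thickening δ B) + partialCost dist μ ν γ := by
  have := hγ.isFiniteMeasure
  have fst_univ_le : γ.fst.real univ ≤ μ.real univ :=
    ENNReal.toReal_mono (measure_ne_top _ _) (hγ.fst_le univ)
  have untransported_le : δ * (μ.real B - γ.fst.real B) ≤
      max (μ.real univ) (ν.real univ) - γ.real univ := by
    calc δ * (μ.real B - γ.fst.real B)
        ≤ δ * (μ.real univ - γ.fst.real univ) := by
          gcongr δ * ?_
          exact measureReal_sub_le_of_le hγ.fst_le hB
      _ ≤ μ.real univ - γ.fst.real univ :=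
          mul_le_of_le_one_left (sub_nonneg.2 fst_univ_le) hδ₁
      _ ≤ max (μ.real univ) (ν.real univ) - γ.real univ := by
          rw [measureReal_def γ.fst, Measure.fst_univ, ← measureReal_def]
          gcongr
          exact le_max_left _ _
  have snd_le : δ * γ.snd.real (thickening δ B) ≤ δ * ν.real (thickening δ B) := by
    gcongr
    exact ENNReal.toReal_mono (measure_ne_top _ _) (hγ.snd_le _)
  have transported_le := mul_measureReal_fst_le hd γ hδ hB
  rw [partialCost]
  linarith

lemma measure_le_of_isClosed_of_uwDist_eq_zero (hd : ∀ x y : S, dist x y ≤ 1) (hμ : μ univ ≤ 1)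
    (hν : ν univ ≤ 1) (h : uwDist dist μ ν = 0) {B : Set S} (hB : IsClosed B) : μ B ≤ ν B := by
  have : IsFiniteMeasure μ := ⟨hμ.trans_lt ENNReal.one_lt_top⟩
  have : IsFiniteMeasure ν := ⟨hν.trans_lt ENNReal.one_lt_top⟩
  have le_thickening {δ : ℝ} (hδ : δ ∈ Ioc 0 1) : μ B ≤ ν (thickening δ B) := by
    have scaled : δ * μ.real B - δ * ν.real (thickening δ B) ≤ uwDist dist μ ν := by
      refine (isGLB_uwDist_dist hd hμ hν).2 ?_
      rintro _ ⟨γ, hγ, rfl⟩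
      exact sub_le_iff_le_add'.2 (hγ.mul_measureReal_le hd hδ.1.le hδ.2 hB.measurableSet)
    rw [h, sub_nonpos] at scaled
    exact (ENNReal.toReal_le_toReal (measure_ne_top _ _) (measure_ne_top _ _)).1
      (le_of_mul_le_mul_left scaled hδ.1)
  refine ge_of_tendsto
    (tendsto_measure_thickening_of_isClosed ⟨1, one_pos, measure_ne_top ν _⟩ hB) ?_
  filter_upwards [Ioc_mem_nhdsGT one_pos] with δ hδ using le_thickening hδ

end Metric

section Borel

variable {S : Type*} [PseudoMetricSpace S] [MeasurableSpace S] [BorelSpace S]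

lemma uwDist_eq_zero_iff [SecondCountableTopology S] {μ ν : Measure S}
    (hd : ∀ x y : S, dist x y ≤ 1) (hμ : μ univ ≤ 1) (hν : ν univ ≤ 1) :
    uwDist dist μ ν = 0 ↔ μ = ν := by
  constructor
  · intro h
    have : IsFiniteMeasure μ := ⟨hμ.trans_lt ENNReal.one_lt_top⟩
    have h' : uwDist dist ν μ = 0 := by
      rwa [uwDist_comm measurable_dist (dist_mem_Icc_zero_one hd) dist_comm hν hμ]
    exact eq_of_forall_isClosed_measure_eq fun B hB =>
      (measure_le_of_isClosed_of_uwDist_eq_zero hd hμ hν h hB).antisymm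
        (measure_le_of_isClosed_of_uwDist_eq_zero hd hν hμ h' hB)
  · rintro rfl
    exact uwDist_self measurable_dist (fun _ _ => dist_nonneg) dist_self hμ

theorem unbalanced_wasserstein_metric_general [TopologicalSpace.SeparableSpace S]
    (hd : ∀ x y : S, dist x y ≤ 1) :
    (∀ μ ν : Measure S, μ univ ≤ 1 → ν univ ≤ 1 → 0 ≤ uwDist dist μ ν) ∧
    (∀ μ ν : Measure S, μ univ ≤ 1 → ν univ ≤ 1 → uwDist dist μ ν = uwDist dist ν μ) ∧
    (∀ μ ν : Measure S, μ univ ≤ 1 → ν univ ≤ 1 → (uwDist dist μ ν = 0 ↔ μ = ν)) ∧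
    (∀ μ ν ξ : Measure S, μ univ ≤ 1 → ν univ ≤ 1 → ξ univ ≤ 1 →
      uwDist dist μ ξ ≤ uwDist dist μ ν + uwDist dist ν ξ) ∧
    (∀ μ ν : Measure S, IsProbabilityMeasure μ → IsProbabilityMeasure ν →
      uwDist dist μ ν = wassersteinDist dist μ ν) := by
  have := UniformSpace.secondCountable_of_separable S
  refine ⟨fun μ ν hμ hν => ?_, fun μ ν hμ hν => ?_, fun μ ν => uwDist_eq_zero_iff hd,
    fun μ ν ξ => uwDist_triangle hd, fun μ ν _ _ => uwDist_eq_wassersteinDist⟩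
  · have : IsFiniteMeasure μ := ⟨hμ.trans_lt ENNReal.one_lt_top⟩
    have : IsFiniteMeasure ν := ⟨hν.trans_lt ENNReal.one_lt_top⟩
    exact uwDist_nonneg fun _ _ => dist_nonneg
  · exact uwDist_comm measurable_dist (dist_mem_Icc_zero_one hd) dist_comm hμ hν

end Borel

/-- On a complete separable metric space of diameter at most one, the unbalanced
Wasserstein distance is a metric on the Borel measures of total mass at most one,
and it coincides with the classical Wasserstein distance on probability measures. -/
theorem unbalanced_wasserstein_metric {S : Type} [MetricSpace S] [CompleteSpace S]
    [TopologicalSpace.SeparableSpace S] [MeasurableSpace S] [BorelSpace S]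
    (hd : ∀ x y : S, dist x y ≤ 1) :
    (∀ μ ν : Measure S, μ Set.univ ≤ 1 → ν Set.univ ≤ 1 → 0 ≤ uwDist dist μ ν) ∧
    (∀ μ ν : Measure S, μ Set.univ ≤ 1 → ν Set.univ ≤ 1 →
      uwDist dist μ ν = uwDist dist ν μ) ∧
    (∀ μ ν : Measure S, μ Set.univ ≤ 1 → ν Set.univ ≤ 1 →
      (uwDist dist μ ν = 0 ↔ μ = ν)) ∧
    (∀ μ ν ξ : Measure S, μ Set.univ ≤ 1 → ν Set.univ ≤ 1 → ξ Set.univ ≤ 1 →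
      uwDist dist μ ξ ≤ uwDist dist μ ν + uwDist dist ν ξ) ∧
    (∀ μ ν : Measure S, IsProbabilityMeasure μ → IsProbabilityMeasure ν →
      uwDist dist μ ν = wassersteinDist dist μ ν) :=
  unbalanced_wasserstein_metric_general hd

end
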